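/- arXiv:math/0701312 — 2 statements merged into one kernel-verified Lean document; each statement's English description precedes it below -/
import Mathlib

section
/- Let n ≥ 1 and let F, G be coprime completely reducible homogeneous polynomials of the same degree d ≥ 1 in R = MvPolynomial (Fin (n+1)) ℂ such that the generic fiber of the pencil 𝒫 generated by F and G is irreducible. If there exist more than 5 pairwise distinct completely reducible members of 𝒫, then d = 1, i.e. every member of the pencil is a linear form (a pencil of hyperplanes). -/
open MvPolynomial

noncomputable section

/-- A linear form: a nonzero homogeneous polynomial of degree 1. -/
def IsLinearForm (n : ℕ) (α : MvPolynomial (Fin (n + 1)) ℂ) : Prop :=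
  α ≠ 0 ∧ α.IsHomogeneous 1

/-- A completely reducible polynomial: a product of linear forms. -/
def CompletelyReducible (n : ℕ) (P : MvPolynomial (Fin (n + 1)) ℂ) : Prop :=
  ∃ s : Multiset (MvPolynomial (Fin (n + 1)) ℂ),
    (∀ α ∈ s, IsLinearForm n α) ∧ P = s.prod

/-- F and G have no common non-unit factor. -/
def RelPrime (n : ℕ) (F G : MvPolynomial (Fin (n + 1)) ℂ) : Prop :=
  ∀ p : MvPolynomial (Fin (n + 1)) ℂ, p ∣ F → p ∣ G → IsUnit p

/-- The generic fiber of the pencil generated by F and G is irreducible. -/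
def GenericFiberIrreducible (n : ℕ) (F G : MvPolynomial (Fin (n + 1)) ℂ) : Prop :=
  {c : ℂ | ¬ Irreducible (F + C c * G)}.Finite

/-!
Two constant vector fields `D, E` and a 1-form with values `a, b` on them define a foliation whose
leaves are tangent to `X = b D - a E`; the leaves are straight exactly where `b X(a) - a X(b)`
vanishes. For the 1-form `F dG - G dF`, whose leaves are the members of the pencil, this
expression is homogeneous of degree `6d - 4` and depends on the generators only up to a nonzero
constant. It is divisible by every completely reducible member, as such a member is a union of
straight leaves. Six pairwise coprime such members have total degree `6d > 6d - 4`, so the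
expression is zero, in every pair of constant directions. Hence the irreducible member through a
general point contains the whole tangent hyperplane at that point, and is therefore equal to it.
-/

section FoliationCurvature

variable {R A : Type*} [CommRing R] [CommRing A] [Algebra R A] (D E : Derivation R A A)

/-- The vector field `b D - a E`, spanning the kernel of the 1-form with values `a` on `D` and `b`
on `E`. -/
def tangentField (a b : A) : Derivation R A A := b • D - a • E

/-- The numerator of the curvature of the leaves of the foliation defined by the 1-form with values
`a` on `D` and `b` on `E`. For the 1-form `dP`, that is `a = D P` and `b = E P`, the leaves are the
level sets of `P`. -/
def foliationCurvature (a b : A) : A :=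
  b * tangentField D E a b a - a * tangentField D E a b b

/-- The value on the vector field `D` of the 1-form `P dQ - Q dP`, whose leaves are the members of
the pencil generated by `P` and `Q`. -/
def pencilForm (P Q : A) : A := P * D Q - Q * D P

/-- The curvature of the foliation by the members of the pencil generated by `P` and `Q`. -/
def pencilCurvature (P Q : A) : A :=
  foliationCurvature D E (pencilForm D P Q) (pencilForm E P Q)

theorem tangentField_apply (a b f : A) : tangentField D E a b f = b * D f - a * E f := rfl

theorem foliationCurvature_smul (r : R) (a b : A) :
    foliationCurvature D E (r • a) (r • b) = r ^ 3 • foliationCurvature D E a b := by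
  simp only [foliationCurvature, tangentField_apply, Derivation.map_smul]
  simp only [Algebra.smul_def, map_pow]
  ring

/-- Modulo `P` the form `P dQ + r Q dP` is `r Q dP`, and modulo `Q` it is `P dQ`, which accounts for
the two cubic terms; its tangent field `X` respects both reductions, as `P ∣ X P` and `Q ∣ X Q`. -/
theorem mul_dvd_foliationCurvature_sub (r : R) (P Q : A) :
    P * Q ∣ foliationCurvature D E (P * D Q + r • (Q * D P)) (P * E Q + r • (Q * E P)) -
      (P ^ 3 * foliationCurvature D E (D Q) (E Q) +
        r ^ 3 • (Q ^ 3 * foliationCurvature D E (D P) (E P))) := by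
  set X := tangentField D E (D P) (E P) with hX
  set Y := tangentField D E (D Q) (E Q) with hY
  set s := algebraMap R A r with hs
  refine ⟨s * P * (E Q * X (D Q) - D Q * X (E Q) + E P * Y (D Q) - D P * Y (E Q)
        + E Q * Y (D P) - D Q * Y (E P))
      + s ^ 2 * Q * (E P * X (D Q) - D P * X (E Q) + E Q * X (D P) - D Q * X (E P)
        + E P * Y (D P) - D P * Y (E P))
      - (s + s ^ 2) * (D P * E Q - E P * D Q) ^ 2, ?_⟩
  simp only [hX, hY, hs, foliationCurvature, tangentField_apply, Derivation.leibniz, smul_eq_mul,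
    Algebra.smul_def, map_add, map_pow, Derivation.map_algebraMap]
  ring

theorem mul_dvd_foliationCurvature_mul {P Q : A}
    (hP : P ∣ foliationCurvature D E (D P) (E P)) (hQ : Q ∣ foliationCurvature D E (D Q) (E Q)) :
    P * Q ∣ foliationCurvature D E (D (P * Q)) (E (P * Q)) := by
  have hsum : P * Q ∣ P ^ 3 * foliationCurvature D E (D Q) (E Q) +
      (1 : R) ^ 3 • (Q ^ 3 * foliationCurvature D E (D P) (E P)) := by
    rw [one_pow, one_smul]
    refine dvd_add (mul_dvd_mul (dvd_pow_self P three_ne_zero) hQ) ?_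
    rw [mul_comm P Q]
    exact mul_dvd_mul (dvd_pow_self Q three_ne_zero) hP
  simpa only [Derivation.leibniz, smul_eq_mul, one_smul] using
    (dvd_sub_left hsum).mp (mul_dvd_foliationCurvature_sub D E (1 : R) P Q)

theorem dvd_pencilCurvature_add (P Q : A) :
    P ∣ pencilCurvature D E P Q + Q ^ 3 * foliationCurvature D E (D P) (E P) := by
  have hsub := (dvd_mul_right P Q).trans (mul_dvd_foliationCurvature_sub D E (-1 : R) P Q)
  have hP : P ∣ P ^ 3 * foliationCurvature D E (D Q) (E Q) :=
    (dvd_pow_self P three_ne_zero).mul_right _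
  convert dvd_add hsub hP using 1
  simp only [pencilCurvature, pencilForm, neg_smul, one_smul, (show Odd 3 by decide).neg_one_pow,
    ← sub_eq_add_neg]
  ring

theorem pencilForm_linearCombination (a b a' b' : R) (F G : A) :
    pencilForm D (a • F + b • G) (a' • F + b' • G) = (a * b' - b * a') • pencilForm D F G := by
  simp only [pencilForm, map_add, Derivation.map_smul]
  simp only [Algebra.smul_def, map_sub, map_mul]
  ring

theorem pencilCurvature_linearCombination (a b a' b' : R) (F G : A) :
    pencilCurvature D E (a • F + b • G) (a' • F + b' • G) =
      (a * b' - b * a') ^ 3 • pencilCurvature D E F G := by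
  simp only [pencilCurvature, pencilForm_linearCombination, foliationCurvature_smul]

theorem dvd_mul_foliationCurvature_of_pencilCurvature_eq_zero {F G : A}
    (hFG : pencilCurvature D E F G = 0) (r : R) :
    F + r • G ∣ G ^ 3 * foliationCurvature D E (D (F + r • G)) (E (F + r • G)) := by
  have hzero : pencilCurvature D E (F + r • G) G = 0 := by
    simpa [hFG] using pencilCurvature_linearCombination D E 1 r 0 1 F G
  simpa only [hzero, zero_add] using dvd_pencilCurvature_add D E (F + r • G) G

end FoliationCurvature

theorem isRelPrime_linearCombination {K A : Type*} [Field K] [CommRing A] [Algebra K A] {F G : A}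
    (hFG : IsRelPrime F G) {a b a' b' : K} (hdet : a * b' - b * a' ≠ 0) :
    IsRelPrime (a • F + b • G) (a' • F + b' • G) := by
  intro q hq hq'
  have hdvd (r r' : K) :
      q ∣ (a * b' - b * a')⁻¹ • (r • (a • F + b • G) + r' • (a' • F + b' • G)) :=
    dvd_smul_of_dvd _ (dvd_add (dvd_smul_of_dvd r hq) (dvd_smul_of_dvd r' hq'))
  apply hFG
  · convert hdvd b' (-b) using 1
    rw [eq_inv_smul_iff₀ hdet]
    module
  · convert hdvd (-a') a using 1
    rw [eq_inv_smul_iff₀ hdet]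
    module

section RootMultiplicity

variable {K : Type*} [Field K] [CharZero K] {g : Polynomial K} {x : K}

theorem not_pow_rootMultiplicity_dvd_derivative (hg : g ≠ 0) (hx : g.IsRoot x) :
    ¬ (Polynomial.X - Polynomial.C x) ^ g.rootMultiplicity x ∣ g.derivative := by
  intro hdvd
  have hpos : 0 < g.rootMultiplicity x := (Polynomial.rootMultiplicity_pos hg).mpr hx
  have hg' : g.derivative ≠ 0 := by
    intro hzero
    obtain ⟨a, rfl⟩ := Polynomial.natDegree_eq_zero.mp (Polynomial.derivative_eq_zero.mp hzero)
    rw [Polynomial.rootMultiplicity_C] at hpos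
    exact hpos.false
  have hle := (Polynomial.le_rootMultiplicity_iff hg').mpr hdvd
  rw [Polynomial.derivative_rootMultiplicity_of_root hx] at hle
  omega

/-- Compare orders of vanishing at `x`, which differentiation lowers by one. -/
theorem eq_zero_of_dvd_mul_derivative_add {M N : Polynomial K} (hg : g.IsRoot x)
    (hg' : g.derivative.IsRoot x) (hM : ¬ M.IsRoot x)
    (hdvd : g ∣ M * g.derivative.derivative + g.derivative * N) : g = 0 := by
  by_contra hne
  have hne' : g.derivative ≠ 0 := fun hzero ↦
    not_pow_rootMultiplicity_dvd_derivative hne hg (hzero ▸ dvd_zero _)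
  set ℓ := Polynomial.X - Polynomial.C x
  set m := g.derivative.rootMultiplicity x with hm
  apply not_pow_rootMultiplicity_dvd_derivative hne' hg'
  have hdvd_g : ℓ ^ m ∣ g := by
    rw [hm, Polynomial.derivative_rootMultiplicity_of_root hg]
    exact (pow_dvd_pow _ (Nat.sub_le _ _)).trans (Polynomial.pow_rootMultiplicity_dvd g x)
  have hdvd_mul : ℓ ^ m ∣ M * g.derivative.derivative :=
    (dvd_add_left ((Polynomial.pow_rootMultiplicity_dvd _ x).mul_right N)).mp (hdvd_g.trans hdvd)
  have hcop : IsCoprime ℓ M :=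
    (Polynomial.irreducible_X_sub_C x).coprime_iff_not_dvd.mpr
      (mt Polynomial.dvd_iff_isRoot.mp hM)
  exact hcop.pow_left.dvd_of_dvd_mul_left hdvd_mul

end RootMultiplicity

section DirectionalDerivative

variable {σ K : Type*} [CommRing K]

/-- The derivative in the constant direction `u`. -/
def dirDeriv (u : σ → K) : Derivation K (MvPolynomial σ K) (MvPolynomial σ K) :=
  mkDerivation K fun i ↦ C (u i)

/-- The restriction of a polynomial to the parametrized line `s ↦ p + s t`. -/
def lineRestriction (p t : σ → K) : MvPolynomial σ K →ₐ[K] Polynomial K :=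
  aeval fun i ↦ Polynomial.C (p i) + Polynomial.C (t i) * Polynomial.X

theorem eval_lineRestriction (p t : σ → K) (P : MvPolynomial σ K) (s : K) :
    (lineRestriction p t P).eval s = eval (fun i ↦ p i + t i * s) P := by
  induction P using MvPolynomial.induction_on with
  | C a => simp [lineRestriction]
  | add P Q hP hQ => simp only [map_add, Polynomial.eval_add, hP, hQ]
  | mul_X P i hP => simp [lineRestriction, ← hP]

theorem lineRestriction_dirDeriv (p t : σ → K) (P : MvPolynomial σ K) :
    lineRestriction p t (dirDeriv t P) = Polynomial.derivative (lineRestriction p t P) := by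
  induction P using MvPolynomial.induction_on with
  | C a => simp [lineRestriction]
  | add P Q hP hQ => simp only [map_add, hP, hQ]
  | mul_X P i hP =>
    have hX : lineRestriction p t (dirDeriv t (X i)) =
        Polynomial.derivative (lineRestriction p t (X i)) := by
      simp [lineRestriction, dirDeriv]
    simp only [Derivation.leibniz, smul_eq_mul, map_add, map_mul, hP, hX,
      Polynomial.derivative_mul]
    ring

theorem dirDeriv_eq_sum_pderiv (u : σ → K) (P : MvPolynomial σ K) :
    dirDeriv u P = ∑ i ∈ P.vars, C (u i) * pderiv i P := by
  classical
  let D (i : σ) : Derivation K (MvPolynomial σ K) (MvPolynomial σ K) :=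
    (C (u i) : MvPolynomial σ K) • pderiv i
  have happly (Q : MvPolynomial σ K) :
      (∑ i ∈ P.vars, D i) Q = ∑ i ∈ P.vars, C (u i) * pderiv i Q := by
    have hcoe := congrFun (map_sum Derivation.coeFnAddMonoidHom D P.vars) Q
    rwa [Finset.sum_apply] at hcoe
  rw [← happly]
  refine derivation_eq_of_forall_mem_vars fun j hj ↦ ?_
  rw [happly]
  simp [dirDeriv, pderiv_X, Pi.single_apply, hj]

theorem isHomogeneous_dirDeriv {d : ℕ} (u : σ → K) {P : MvPolynomial σ K}
    (hP : P.IsHomogeneous d) : (dirDeriv u P).IsHomogeneous (d - 1) := by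
  rw [dirDeriv_eq_sum_pderiv]
  exact IsHomogeneous.sum _ _ _ fun i _ ↦ hP.pderiv.C_mul _

theorem eval_dirDeriv (p u : σ → K) (P : MvPolynomial σ K) :
    eval p (dirDeriv u P) = ∑ i ∈ P.vars, eval p (pderiv i P) * u i := by
  simp [dirDeriv_eq_sum_pderiv, mul_comm]

theorem eval_dirDeriv_self {d : ℕ} (p : σ → K) {P : MvPolynomial σ K} (hP : P.IsHomogeneous d) :
    eval p (dirDeriv p P) = d * eval p P := by
  rw [P.as_sum]
  simp only [map_sum, Finset.mul_sum]
  refine Finset.sum_congr rfl fun m hm ↦ ?_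
  have hX (i : σ) : eval p (pderiv i (monomial m (coeff m P))) * p i =
      m i * eval p (monomial m (coeff m P)) := by
    simpa [mul_comm] using
      congrArg (eval p) (X_mul_pderiv_monomial (i := i) (m := m) (r := coeff m P))
  rw [eval_dirDeriv, vars_monomial (mem_support_iff.mp hm)]
  simp only [hX, ← Finset.sum_mul, ← Nat.cast_sum]
  congr 2
  rw [← hP (mem_support_iff.mp hm), Finsupp.weight_apply]
  simp [Finsupp.sum]

theorem dirDeriv_eq_zero_of_dvd [IsDomain K] {d : ℕ} (hd : d ≠ 0) {u : σ → K}
    {P : MvPolynomial σ K} (hP : P.IsHomogeneous d) (hdvd : P ∣ dirDeriv u P) :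
    dirDeriv u P = 0 := by
  by_contra hne
  have hle := totalDegree_le_of_dvd_of_isDomain hdvd hne
  rw [hP.totalDegree (ne_zero_of_dvd_ne_zero hne hdvd),
    (isHomogeneous_dirDeriv u hP).totalDegree hne] at hle
  omega

theorem exists_dirDeriv_ne_zero [IsDomain K] [CharZero K] {d : ℕ} (hd : d ≠ 0)
    {P : MvPolynomial σ K} (hP : P.IsHomogeneous d) (hne : P ≠ 0) :
    ∃ u : σ → K, dirDeriv u P ≠ 0 := by
  by_contra! hzero
  refine hne (MvPolynomial.funext fun p ↦ ?_)
  have hEuler := eval_dirDeriv_self p hP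
  rw [hzero, map_zero, eq_comm] at hEuler
  rw [map_zero]
  exact (mul_eq_zero.mp hEuler).resolve_left (Nat.cast_ne_zero.mpr hd)

theorem isHomogeneous_foliationCurvature {e : ℕ} (u v : σ → K) {a b : MvPolynomial σ K}
    (ha : a.IsHomogeneous e) (hb : b.IsHomogeneous e) :
    (foliationCurvature (dirDeriv u) (dirDeriv v) a b).IsHomogeneous (e + (e + (e - 1))) := by
  have htangent {f : MvPolynomial σ K} (hf : f.IsHomogeneous e) :
      (tangentField (dirDeriv u) (dirDeriv v) a b f).IsHomogeneous (e + (e - 1)) :=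
    (hb.mul (isHomogeneous_dirDeriv u hf)).sub (ha.mul (isHomogeneous_dirDeriv v hf))
  exact (hb.mul (htangent ha)).sub (ha.mul (htangent hb))

theorem isHomogeneous_pencilForm {d : ℕ} (u : σ → K) {F G : MvPolynomial σ K}
    (hF : F.IsHomogeneous d) (hG : G.IsHomogeneous d) :
    (pencilForm (dirDeriv u) F G).IsHomogeneous (d + (d - 1)) :=
  (hF.mul (isHomogeneous_dirDeriv u hG)).sub (hG.mul (isHomogeneous_dirDeriv u hF))

theorem dirDeriv_dirDeriv_eq_zero (u v : σ → K) {α : MvPolynomial σ K} (hα : α.IsHomogeneous 1) :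
    dirDeriv u (dirDeriv v α) = 0 := by
  have hconst := (totalDegree_zero_iff_isHomogeneous (p := dirDeriv v α)).mpr
    (isHomogeneous_dirDeriv v hα)
  rw [totalDegree_eq_zero_iff_eq_C.mp hconst, derivation_C]

end DirectionalDerivative

section LinearForms

variable {σ K : Type*}

/-- The notion of `CompletelyReducible` over any coefficient ring and in any set of variables. -/
def IsProductOfLinearForms [CommRing K] (P : MvPolynomial σ K) : Prop :=
  ∃ s : Multiset (MvPolynomial σ K), (∀ α ∈ s, α ≠ 0 ∧ α.IsHomogeneous 1) ∧ P = s.prod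

theorem IsProductOfLinearForms.ne_zero [CommRing K] [IsDomain K] {P : MvPolynomial σ K}
    (hP : IsProductOfLinearForms P) : P ≠ 0 := by
  obtain ⟨s, hs, rfl⟩ := hP
  exact Multiset.prod_ne_zero fun hmem ↦ (hs 0 hmem).1 rfl

theorem IsProductOfLinearForms.dvd_foliationCurvature [CommRing K]
    {P : MvPolynomial σ K} (hP : IsProductOfLinearForms P) (u v : σ → K) :
    P ∣ foliationCurvature (dirDeriv u) (dirDeriv v) (dirDeriv u P) (dirDeriv v P) := by
  obtain ⟨s, hs, rfl⟩ := hP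
  refine Multiset.prod_induction
    (fun P ↦ P ∣ foliationCurvature (dirDeriv u) (dirDeriv v) (dirDeriv u P) (dirDeriv v P)) s
    (fun _ _ ↦ mul_dvd_foliationCurvature_mul _ _) (one_dvd _) fun α hα ↦ ?_
  simp [foliationCurvature, tangentField_apply, dirDeriv_dirDeriv_eq_zero _ _ (hs α hα).2]

theorem not_isUnit_of_isHomogeneous [CommRing K] [IsDomain K] {d : ℕ} (hd : d ≠ 0)
    {P : MvPolynomial σ K} (hP : P.IsHomogeneous d) : ¬ IsUnit P := by
  intro hunit
  apply hd
  rw [← hP.totalDegree hunit.ne_zero, (isUnit_iff_totalDegree_of_isReduced.mp hunit).2]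

theorem right_ne_zero_of_isRelPrime [CommRing K] [IsDomain K] {d : ℕ} (hd : d ≠ 0)
    {F G : MvPolynomial σ K} (hF : F.IsHomogeneous d) (hFG : IsRelPrime F G) : G ≠ 0 := by
  rintro rfl
  exact not_isUnit_of_isHomogeneous hd hF (isRelPrime_zero_right.mp hFG)

theorem eq_one_of_irreducible_of_dvd [CommRing K] [IsDomain K] {d : ℕ} {L P : MvPolynomial σ K}
    (hP : P.IsHomogeneous d) (hirr : Irreducible P) (hL : L.IsHomogeneous 1) (hdvd : L ∣ P) :
    d = 1 := by
  have hassoc : Associated P L :=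
    (hirr.dvd_iff.mp hdvd).resolve_left (not_isUnit_of_isHomogeneous one_ne_zero hL)
  have hL0 : L ≠ 0 := ne_zero_of_dvd_ne_zero hirr.ne_zero hdvd
  have hle := totalDegree_le_of_dvd_of_isDomain hassoc.dvd hL0
  have hge := totalDegree_le_of_dvd_of_isDomain hdvd hirr.ne_zero
  rw [hP.totalDegree hirr.ne_zero, hL.totalDegree hL0] at hle hge
  exact le_antisymm hle hge

theorem sub_aeval_mem [CommRing K] {I : Ideal (MvPolynomial σ K)} {f : σ → MvPolynomial σ K}
    (hf : ∀ i, X i - f i ∈ I) (P : MvPolynomial σ K) : P - aeval f P ∈ I := by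
  have hcomp : (Ideal.Quotient.mkₐ K I).comp (aeval f) = Ideal.Quotient.mkₐ K I := by
    apply MvPolynomial.algHom_ext
    intro i
    rw [AlgHom.comp_apply, aeval_X]
    exact (Ideal.Quotient.eq.mpr (hf i)).symm
  exact Ideal.Quotient.eq.mp (DFunLike.congr_fun hcomp P).symm

/-- Projecting along a vector `w` outside the hyperplane `L = 0` kills `P` and changes it only by a
multiple of `L`. -/
theorem sum_C_mul_X_dvd_of_forall_eval_eq_zero [Field K] [Infinite K] {s : Finset σ} {l : σ → K}
    (hl : ∃ i ∈ s, l i ≠ 0) {P : MvPolynomial σ K}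
    (hP : ∀ y, ∑ i ∈ s, l i * y i = 0 → eval y P = 0) :
    ∑ i ∈ s, C (l i) * X i ∣ P := by
  classical
  obtain ⟨j, hjs, hj⟩ := hl
  set L : MvPolynomial σ K := ∑ i ∈ s, C (l i) * X i with hL
  set w : σ → K := Pi.single j (l j)⁻¹
  have hw : ∑ i ∈ s, l i * w i = 1 := by
    simpa [w, Pi.single_apply, hjs] using mul_inv_cancel₀ hj
  set f : σ → MvPolynomial σ K := fun i ↦ X i - C (w i) * L
  have hzero : aeval f P = 0 := by
    refine MvPolynomial.funext fun y ↦ ?_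
    have heval : eval y (aeval f P) = eval (fun i ↦ eval y (f i)) P := aeval_bind₁ y f P
    rw [heval, map_zero]
    apply hP
    calc ∑ i ∈ s, l i * eval y (f i)
        = ∑ i ∈ s, l i * y i - (∑ i ∈ s, l i * w i) * eval y L := by
          simp [f, mul_sub, Finset.sum_mul, mul_assoc]
      _ = 0 := by simp [hw, hL]
  have hmem := sub_aeval_mem (I := Ideal.span {L}) (f := f) (fun i ↦ by
    simp [f, Ideal.mem_span_singleton]) P
  rwa [hzero, sub_zero, Ideal.mem_span_singleton] at hmem

end LinearForms

section Tangent

variable {σ K : Type*}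

/-- The linear form cutting out the tangent hyperplane of `P = 0` at `p`. Summing over `P.vars`
keeps the sum finite when `σ` is infinite. -/
def tangentForm [CommRing K] (p : σ → K) (P : MvPolynomial σ K) : MvPolynomial σ K :=
  ∑ i ∈ P.vars, C (eval p (pderiv i P)) * X i

theorem isHomogeneous_tangentForm [CommRing K] (p : σ → K) (P : MvPolynomial σ K) :
    (tangentForm p P).IsHomogeneous 1 :=
  IsHomogeneous.sum _ _ _ fun _ _ ↦ isHomogeneous_C_mul_X _ _

variable [Field K] [CharZero K]

theorem lineRestriction_eq_zero_of_dvd {P Q : MvPolynomial σ K} {p t v : σ → K}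
    (hdvd : P ∣ Q * foliationCurvature (dirDeriv t) (dirDeriv v) (dirDeriv t P) (dirDeriv v P))
    (hQ : eval p Q ≠ 0) (hP : eval p P = 0) (ht : eval p (dirDeriv t P) = 0)
    (hv : eval p (dirDeriv v P) ≠ 0) : lineRestriction p t P = 0 := by
  have heval (f : MvPolynomial σ K) : (lineRestriction p t f).eval 0 = eval p f := by
    simp [eval_lineRestriction]
  set N := -(dirDeriv v P * dirDeriv v (dirDeriv t P)) -
    tangentField (dirDeriv t) (dirDeriv v) (dirDeriv t P) (dirDeriv v P) (dirDeriv v P) with hN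
  refine eq_zero_of_dvd_mul_derivative_add (x := 0)
    (M := lineRestriction p t (Q * dirDeriv v P ^ 2)) (N := lineRestriction p t (Q * N)) ?_ ?_ ?_ ?_
  · rw [Polynomial.IsRoot, heval, hP]
  · rw [Polynomial.IsRoot, ← lineRestriction_dirDeriv, heval, ht]
  · simp [Polynomial.IsRoot, heval, hQ, hv]
  · simp only [← lineRestriction_dirDeriv, ← map_mul, ← map_add]
    convert map_dvd (lineRestriction p t) hdvd using 2
    simp only [hN, foliationCurvature, tangentField_apply]
    ring

theorem tangentForm_dvd {d : ℕ} {P Q : MvPolynomial σ K} {p v : σ → K}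
    (hPd : P.IsHomogeneous d)
    (hdvd : ∀ t, P ∣ Q *
      foliationCurvature (dirDeriv t) (dirDeriv v) (dirDeriv t P) (dirDeriv v P))
    (hQ : eval p Q ≠ 0) (hP : eval p P = 0) (hv : eval p (dirDeriv v P) ≠ 0) :
    tangentForm p P ∣ P := by
  have hgrad : ∃ i ∈ P.vars, eval p (pderiv i P) ≠ 0 := by
    rw [eval_dirDeriv] at hv
    obtain ⟨i, hi, hne⟩ := Finset.exists_ne_zero_of_sum_ne_zero hv
    exact ⟨i, hi, left_ne_zero_of_mul hne⟩
  refine sum_C_mul_X_dvd_of_forall_eval_eq_zero hgrad fun y hy ↦ ?_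
  have ht : eval p (dirDeriv (y - p) P) = 0 := by
    have hp := eval_dirDeriv_self p hPd
    rw [hP, mul_zero, eval_dirDeriv] at hp
    simp [eval_dirDeriv, mul_sub, hy, hp]
  have hline := eval_lineRestriction p (y - p) P 1
  rw [lineRestriction_eq_zero_of_dvd (hdvd _) hQ hP ht hv] at hline
  simpa using hline.symm

end Tangent

section Pencil

variable {σ K : Type*} [Field K] {d : ℕ} {F G : MvPolynomial σ K}

theorem exists_irreducible_add_smul_of_finite [Infinite K] {H : MvPolynomial σ K}
    (hgen : {z : K | ¬ Irreducible (F + z • G)}.Finite) (hne : ∀ z : K, F + z • G ≠ 0)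
    (hH : H ≠ 0) (hG : G ≠ 0) :
    ∃ (z : K) (p : σ → K), Irreducible (F + z • G) ∧ eval p (F + z • G) = 0 ∧ eval p G ≠ 0 ∧
      eval p H ≠ 0 := by
  obtain ⟨p, hp⟩ : ∃ p, eval p (G * H * ∏ z ∈ hgen.toFinset, (F + z • G)) ≠ 0 := by
    by_contra! hzero
    exact mul_ne_zero (mul_ne_zero hG hH) (Finset.prod_ne_zero_iff.mpr fun z _ ↦ hne z)
      (MvPolynomial.funext fun p ↦ by rw [hzero, map_zero])
  simp only [map_mul, map_prod, mul_ne_zero_iff, Finset.prod_ne_zero_iff] at hp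
  obtain ⟨⟨hpG, hpH⟩, hpbad⟩ := hp
  have hpz : eval p (F + (-eval p F / eval p G) • G) = 0 := by
    rw [map_add, smul_eval, div_mul_cancel₀ _ hpG, add_neg_cancel]
  refine ⟨_, p, ?_, hpz, hpG, hpH⟩
  by_contra hred
  exact hpbad _ (hgen.mem_toFinset.mpr hred) hpz

theorem exists_pencilForm_ne_zero [CharZero K] (hd : d ≠ 0) (hG : G.IsHomogeneous d) (hG0 : G ≠ 0)
    (hcop : IsRelPrime F G) :
    ∃ u : σ → K, pencilForm (dirDeriv u) F G ≠ 0 := by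
  obtain ⟨u, hu⟩ := exists_dirDeriv_ne_zero hd hG hG0
  refine ⟨u, fun hzero ↦ hu (dirDeriv_eq_zero_of_dvd hd hG ?_)⟩
  have hdvd : G ∣ F * dirDeriv u G := ⟨dirDeriv u F, sub_eq_zero.mp hzero⟩
  exact hcop.symm.dvd_of_dvd_mul_left hdvd

theorem IsProductOfLinearForms.dvd_pencilCurvature {a b a' b' : K}
    (hdet : a * b' - b * a' ≠ 0) (hP : IsProductOfLinearForms (a • F + b • G)) (u v : σ → K) :
    a • F + b • G ∣ pencilCurvature (dirDeriv u) (dirDeriv v) F G := by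
  have hdvd : a • F + b • G ∣
      pencilCurvature (dirDeriv u) (dirDeriv v) (a • F + b • G) (a' • F + b' • G) :=
    (dvd_add_left ((hP.dvd_foliationCurvature u v).mul_left _)).mp
      (dvd_pencilCurvature_add _ _ _ _)
  rw [pencilCurvature_linearCombination] at hdvd
  rw [← inv_smul_smul₀ (pow_ne_zero 3 hdet) (pencilCurvature (dirDeriv u) (dirDeriv v) F G)]
  exact dvd_smul_of_dvd _ hdvd

theorem pencilCurvature_eq_zero {ι : Type*} [Fintype ι] (hι : 5 < Fintype.card ι) (hd : d ≠ 0)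
    (hF : F.IsHomogeneous d) (hG : G.IsHomogeneous d) (hcop : IsRelPrime F G) {c : ι → K × K}
    (hdet : ∀ i j, i ≠ j → (c i).1 * (c j).2 - (c i).2 * (c j).1 ≠ 0)
    (hlin : ∀ i, IsProductOfLinearForms ((c i).1 • F + (c i).2 • G)) (u v : σ → K) :
    pencilCurvature (dirDeriv u) (dirDeriv v) F G = 0 := by
  by_contra hne
  have : Nontrivial ι := Fintype.one_lt_card_iff_nontrivial.mp (by omega)
  have hdvd : ∏ i, ((c i).1 • F + (c i).2 • G) ∣
      pencilCurvature (dirDeriv u) (dirDeriv v) F G :=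
    Fintype.prod_dvd_of_isRelPrime
      (fun i j hij ↦ isRelPrime_linearCombination hcop (hdet i j hij)) fun i ↦
        have ⟨j, hij⟩ := exists_ne i
        (hlin i).dvd_pencilCurvature (hdet i j hij.symm) u v
  have hprod : (∏ i, ((c i).1 • F + (c i).2 • G)).IsHomogeneous (∑ _i : ι, d) :=
    IsHomogeneous.prod _ _ _ fun i _ ↦ by
      simpa only [C_mul'] using (hF.C_mul (c i).1).add (hG.C_mul (c i).2)
  have hcurv := isHomogeneous_foliationCurvature u v (isHomogeneous_pencilForm u hF hG)
    (isHomogeneous_pencilForm v hF hG)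
  have hle := totalDegree_le_of_dvd_of_isDomain hdvd hne
  rw [hprod.totalDegree (Finset.prod_ne_zero_iff.mpr fun i _ ↦ (hlin i).ne_zero),
    pencilCurvature, hcurv.totalDegree hne, Finset.sum_const, Finset.card_univ, smul_eq_mul] at hle
  have hmul : 6 * d ≤ Fintype.card ι * d := Nat.mul_le_mul_right d hι
  omega

theorem pencil_more_than_five_completely_reducible_fibers_general [CharZero K]
    {ι : Type*} [Fintype ι] (hι : 5 < Fintype.card ι) (hd : d ≠ 0)
    (hF : F.IsHomogeneous d) (hG : G.IsHomogeneous d) (hcop : IsRelPrime F G)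
    (hgen : {z : K | ¬ Irreducible (F + z • G)}.Finite) {c : ι → K × K}
    (hdet : ∀ i j, i ≠ j → (c i).1 * (c j).2 - (c i).2 * (c j).1 ≠ 0)
    (hlin : ∀ i, IsProductOfLinearForms ((c i).1 • F + (c i).2 • G)) :
    d = 1 := by
  have hG0 : G ≠ 0 := right_ne_zero_of_isRelPrime hd hF hcop
  obtain ⟨v, hv⟩ := exists_pencilForm_ne_zero hd hG hG0 hcop
  have hne (z : K) : F + z • G ≠ 0 := right_ne_zero_of_isRelPrime hd hG <| by
    simpa using isRelPrime_linearCombination hcop (a := 0) (b := 1) (a' := 1) (b' := z) (by simp)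
  obtain ⟨z, p, hirr, hp, hpG, hpv⟩ := exists_irreducible_add_smul_of_finite hgen hne hv hG0
  have hPd : (F + z • G).IsHomogeneous d := by simpa only [C_mul'] using hF.add (hG.C_mul z)
  have hPv : eval p (dirDeriv v (F + z • G)) ≠ 0 := by
    intro hzero
    have hform : pencilForm (dirDeriv v) (F + z • G) G = pencilForm (dirDeriv v) F G := by
      simpa using pencilForm_linearCombination (dirDeriv v) 1 z 0 1 F G
    apply hpv
    rw [← hform, pencilForm, map_sub, map_mul, map_mul, hp, hzero, zero_mul, mul_zero, sub_zero]
  have htangent : tangentForm p (F + z • G) ∣ F + z • G :=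
    tangentForm_dvd (Q := G ^ 3) hPd
      (fun t ↦ dvd_mul_foliationCurvature_of_pencilCurvature_eq_zero _ _
        (pencilCurvature_eq_zero hι hd hF hG hcop hdet hlin t v) z)
      (by simpa only [map_pow] using pow_ne_zero 3 hpG) hp hPv
  exact eq_one_of_irreducible_of_dvd hPd hirr (isHomogeneous_tangentForm p _) htangent

end Pencil

/-- If a pencil of degree-d hypersurfaces on ℙⁿ with irreducible generic fiber has
more than 5 pairwise distinct completely reducible members, then d = 1. -/
theorem pencil_more_than_five_completely_reducible_fibers
    (n d : ℕ) (hn : 1 ≤ n) (hd : 1 ≤ d)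
    (F G : MvPolynomial (Fin (n + 1)) ℂ)
    (hF : F.IsHomogeneous d) (hG : G.IsHomogeneous d)
    (hFcr : CompletelyReducible n F) (hGcr : CompletelyReducible n G)
    (hcop : RelPrime n F G)
    (hgen : GenericFiberIrreducible n F G)
    (c : Fin 6 → ℂ × ℂ)
    (hprop : ∀ i j, i ≠ j → (c i).1 * (c j).2 ≠ (c i).2 * (c j).1)
    (hcr : ∀ i, CompletelyReducible n (C (c i).1 * F + C (c i).2 * G)) :
    d = 1 := by
  simp only [GenericFiberIrreducible, C_mul'] at hgen
  simp only [C_mul'] at hcr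
  exact pencil_more_than_five_completely_reducible_fibers_general (by simp) (by omega) hF hG
    (fun p ↦ hcop p) hgen (fun i j hij ↦ sub_ne_zero.mpr (hprop i j hij)) hcr
end
end

section
/- Let F, G be coprime completely reducible homogeneous polynomials of the same degree d ≥ 1 in R = MvPolynomial (Fin (n+1)) ℂ whose pencil 𝒫 has irreducible generic fiber. Suppose there exists a member K = aF + bG of 𝒫, distinct from F and from G, such that K = (∏_{i=1}^r ℓ_i)·(∏_{j=1}^s g_j^{e_j}) where the ℓ_i are linear forms and the g_j are irreducible homogeneous polynomials with e_j ≥ 2 for all j (a product of linear forms and non-reduced polynomials). Write F = ∏_{i=1}^u α_i^{m_i} and G = ∏_{j=1}^v β_j^{l_j} with the α_i pairwise non-proportional linear forms and the β_j pairwise non-proportional linear forms. Then for every point p ∈ ℂ^{n+1} ∖ {0} with F(p) = G(p) = 0, one has Σ_{i : α_i(p)=0} m_i = Σ_{j : β_j(p)=0} l_j. -/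
open MvPolynomial

noncomputable section

/-!
Let `E` be the derivation `∑ (xᵢ - pᵢ) ∂ᵢ`. A linear form `α` vanishing at `p` satisfies `E α = α`,
so `F = A U` and `G = B V`, where `E A = c A` and `E B = d B` for the multiplicities `c` and `d` of
`F` and `G` at `p`, while `U` and `V` do not vanish at `p`. Since `E` takes values in the ideal of
`p`, the Wronskian `F * E G - G * E F` is `A B` times a polynomial with value `(d - c) U(p) V(p)` at
`p`. On the other hand, `K = a F + b G` has a factor `h` vanishing at `p` that also divides `E K`: a
linear factor `ℓ` because `E ℓ = ℓ`, or a multiple factor `g` because `g ^ 2 ∣ K`. Then `h` divides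
the Wronskian and is coprime to `A B`, so `(d - c) U(p) V(p) = 0`.
-/

section Derivation

variable {R A : Type*} [CommSemiring R] [CommRing A] [Algebra R A] (D : Derivation R A A)

theorem dvd_derivation_of_dvd_of_dvd_derivation_self {h f : A} (hD : h ∣ D h) (hf : h ∣ f) :
    h ∣ D f := by
  obtain ⟨w, rfl⟩ := hf
  rw [D.leibniz, smul_eq_mul, smul_eq_mul]
  exact dvd_add (dvd_mul_right h _) (hD.mul_left w)

theorem dvd_derivation_of_sq_dvd {h f : A} (hf : h ^ 2 ∣ f) : h ∣ D f := by
  obtain ⟨w, rfl⟩ := hf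
  rw [D.leibniz, D.leibniz_pow]
  simp only [smul_eq_mul, nsmul_eq_mul]
  exact ⟨h * D w + 2 * w * D h, by push_cast; ring⟩

theorem dvd_wronskian_of_dvd_pencil {u v F G h : A} (hv : IsUnit v) (hDu : D u = 0)
    (hDv : D v = 0) (hK : h ∣ u * F + v * G) (hDK : h ∣ D (u * F + v * G)) :
    h ∣ F * D G - G * D F := by
  have wronskian_eq :
      v * (F * D G - G * D F) = F * D (u * F + v * G) - (u * F + v * G) * D F := by
    simp only [map_add, D.leibniz, smul_eq_mul, hDu, hDv]
    ring
  rw [← hv.dvd_mul_left, wronskian_eq]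
  exact (hDK.mul_left F).sub (hK.mul_right _)

end Derivation

theorem isRelPrime_of_dvd_pencil {A : Type*} [CommRing A] {u v F G h : A} (hv : IsUnit v)
    (hFG : IsRelPrime F G) (hK : h ∣ u * F + v * G) : IsRelPrime h F :=
  (((isRelPrime_mul_unit_left_right hv).mpr hFG).mul_add_right_right u).symm.of_dvd_left hK

section EulerDerivation

variable {σ R : Type*} [CommRing R]

/-- The Euler derivation `∑ (Xᵢ - pᵢ) ∂ᵢ` centred at the point `p`. It multiplies a polynomial
homogeneous of degree `k` in the `Xᵢ - pᵢ` by `k`, and so detects multiplicities at `p`. -/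
def eulerDerivation (p : σ → R) : Derivation R (MvPolynomial σ R) (MvPolynomial σ R) :=
  mkDerivation R fun i => X i - C (p i)

theorem eulerDerivation_X (p : σ → R) (i : σ) : eulerDerivation p (X i) = X i - C (p i) :=
  mkDerivation_X _ _ _

theorem eval_eulerDerivation (p : σ → R) (f : MvPolynomial σ R) :
    eval p (eulerDerivation p f) = 0 := by
  induction f using MvPolynomial.induction_on with
  | C c => simp
  | add f g hf hg => simp [hf, hg]
  | mul_X f i hf => simp [Derivation.leibniz, eulerDerivation_X, hf]

theorem eulerDerivation_of_isHomogeneous_one (p : σ → R) {f : MvPolynomial σ R}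
    (hf : f.IsHomogeneous 1) : eulerDerivation p f = f - C (eval p f) := by
  rw [← mem_homogeneousSubmodule, homogeneousSubmodule_one_eq_span_X] at hf
  induction hf using Submodule.span_induction with
  | mem _ hX =>
    obtain ⟨i, rfl⟩ := hX
    simp [eulerDerivation_X]
  | zero => simp
  | add f g _ _ ihf ihg =>
    rw [map_add, ihf, ihg, map_add, C_add]
    ring
  | smul c f _ ihf => rw [Derivation.map_smul, ihf, smul_eval, smul_sub, C_mul, smul_eq_C_mul (C _)]

theorem eulerDerivation_of_totalDegree_le_one (p : σ → R) {f : MvPolynomial σ R}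
    (hf : f.totalDegree ≤ 1) : eulerDerivation p f = f - C (eval p f) := by
  have f_eq : f = C (coeff 0 f) + homogeneousComponent 1 f := by
    calc
      f = ∑ i ∈ Finset.range (f.totalDegree + 1), homogeneousComponent i f :=
        (sum_homogeneousComponent f).symm
      _ = ∑ i ∈ Finset.range 2, homogeneousComponent i f :=
        Finset.sum_subset (Finset.range_mono (Nat.succ_le_succ hf)) fun i _ hi =>
          homogeneousComponent_eq_zero i f (by simpa using hi)
      _ = C (coeff 0 f) + homogeneousComponent 1 f := by
        rw [Finset.sum_range_succ, Finset.sum_range_one, homogeneousComponent_zero]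
  have linear_part :=
    eulerDerivation_of_isHomogeneous_one p (homogeneousComponent_isHomogeneous 1 f)
  rw [f_eq, map_add, map_add, linear_part]
  simp

/-- `HasEulerWeight p F c`: up to a factor that does not vanish at `p`, the polynomial `F` is an
eigenvector of the Euler derivation centred at `p`, with eigenvalue `c`. For a product of linear
forms, `c` is the multiplicity of `F` at `p`. -/
def HasEulerWeight (p : σ → R) (F : MvPolynomial σ R) (c : R) : Prop :=
  ∃ A U : MvPolynomial σ R, F = A * U ∧ eulerDerivation p A = C c * A ∧ eval p U ≠ 0

namespace HasEulerWeight

variable {p : σ → R}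

theorem of_eval_ne_zero {F : MvPolynomial σ R} (hF : eval p F ≠ 0) : HasEulerWeight p F 0 :=
  ⟨1, F, by simp, by simp, hF⟩

theorem of_totalDegree_le_one [Nontrivial R] [DecidableEq R] {F : MvPolynomial σ R}
    (hF : F.totalDegree ≤ 1) : HasEulerWeight p F (if eval p F = 0 then 1 else 0) := by
  split_ifs with hFp
  · exact ⟨F, 1, by simp, by simp [eulerDerivation_of_totalDegree_le_one p hF, hFp], by simp⟩
  · exact of_eval_ne_zero hFp

theorem one [Nontrivial R] : HasEulerWeight p 1 0 :=
  of_eval_ne_zero (by simp)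

theorem mul [NoZeroDivisors R] {F G : MvPolynomial σ R} {c d : R} (hF : HasEulerWeight p F c)
    (hG : HasEulerWeight p G d) : HasEulerWeight p (F * G) (c + d) := by
  obtain ⟨A, U, rfl, hA, hU⟩ := hF
  obtain ⟨B, V, rfl, hB, hV⟩ := hG
  refine ⟨A * B, U * V, by ring, ?_, by simp [hU, hV]⟩
  rw [Derivation.leibniz, hA, hB, smul_eq_mul, smul_eq_mul, C_add]
  ring

variable [IsDomain R]

theorem pow {F : MvPolynomial σ R} {c : R} (hF : HasEulerWeight p F c) (m : ℕ) :
    HasEulerWeight p (F ^ m) (m * c) := by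
  induction m with
  | zero => simpa using one
  | succ m ih => simpa [pow_succ, add_mul] using ih.mul hF

theorem prod {ι : Type*} (s : Finset ι) {F : ι → MvPolynomial σ R} {c : ι → R}
    (hF : ∀ i ∈ s, HasEulerWeight p (F i) (c i)) :
    HasEulerWeight p (∏ i ∈ s, F i) (∑ i ∈ s, c i) := by
  classical
  induction s using Finset.induction_on with
  | empty => exact one
  | insert i s hi ih =>
    rw [Finset.prod_insert hi, Finset.sum_insert hi]
    exact (hF i (Finset.mem_insert_self i s)).mul
      (ih fun j hj => hF j (Finset.mem_insert_of_mem hj))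

theorem prod_pow_of_totalDegree_le_one [DecidableEq R] {ι : Type*} (s : Finset ι)
    {α : ι → MvPolynomial σ R} (hα : ∀ i ∈ s, (α i).totalDegree ≤ 1) (m : ι → ℕ) :
    HasEulerWeight p (∏ i ∈ s, α i ^ m i) ((∑ i ∈ s with eval p (α i) = 0, m i : ℕ) : R) := by
  have h := prod s fun i hi => (of_totalDegree_le_one (p := p) (hα i hi)).pow (m i)
  simpa [Finset.sum_filter] using h

theorem eq_of_dvd_wronskian [UniqueFactorizationMonoid R] {F G h : MvPolynomial σ R} {c d : R}
    (hF : HasEulerWeight p F c) (hG : HasEulerWeight p G d) (hhp : eval p h = 0)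
    (hhF : IsRelPrime h F) (hhG : IsRelPrime h G)
    (hW : h ∣ F * eulerDerivation p G - G * eulerDerivation p F) : c = d := by
  obtain ⟨A, U, rfl, hA, hU⟩ := hF
  obtain ⟨B, V, rfl, hB, hV⟩ := hG
  have wronskian_eq :
      A * U * eulerDerivation p (B * V) - B * V * eulerDerivation p (A * U) =
        A * (B * (C (d - c) * (U * V) + (U * eulerDerivation p V - V * eulerDerivation p U))) := by
    simp only [Derivation.leibniz, hA, hB, smul_eq_mul, C_sub]
    ring
  rw [wronskian_eq] at hW
  have h_dvd := hhG.of_mul_right_left.dvd_of_dvd_mul_left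
    (hhF.of_mul_right_left.dvd_of_dvd_mul_left hW)
  have value_eq_zero : (d - c) * (eval p U * eval p V) = 0 := by
    simpa [hhp, eval_eulerDerivation] using map_dvd (eval p) h_dvd
  exact (sub_eq_zero.mp ((mul_eq_zero_iff_right (mul_ne_zero hU hV)).mp value_eq_zero)).symm

end HasEulerWeight

theorem exists_dvd_and_dvd_eulerDerivation [IsDomain R] {p : σ → R} {ι κ : Type*} {s : Finset ι}
    {t : Finset κ} {ℓ : ι → MvPolynomial σ R} (hℓ : ∀ i ∈ s, (ℓ i).totalDegree ≤ 1)
    {g : κ → MvPolynomial σ R} {e : κ → ℕ} (he : ∀ j ∈ t, 2 ≤ e j)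
    (hp : eval p ((∏ i ∈ s, ℓ i) * ∏ j ∈ t, g j ^ e j) = 0) :
    ∃ h, eval p h = 0 ∧ h ∣ (∏ i ∈ s, ℓ i) * ∏ j ∈ t, g j ^ e j ∧
      h ∣ eulerDerivation p ((∏ i ∈ s, ℓ i) * ∏ j ∈ t, g j ^ e j) := by
  rw [map_mul, mul_eq_zero, map_prod, map_prod, Finset.prod_eq_zero_iff,
    Finset.prod_eq_zero_iff] at hp
  rcases hp with ⟨i, hi, hℓp⟩ | ⟨j, hj, hgp⟩
  · have hℓ_dvd := (Finset.dvd_prod_of_mem ℓ hi).mul_right (∏ j ∈ t, g j ^ e j)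
    have hℓ_fixed : eulerDerivation p (ℓ i) = ℓ i := by
      simp [eulerDerivation_of_totalDegree_le_one p (hℓ i hi), hℓp]
    exact ⟨ℓ i, hℓp, hℓ_dvd,
      dvd_derivation_of_dvd_of_dvd_derivation_self _ hℓ_fixed.symm.dvd hℓ_dvd⟩
  · have hg_sq_dvd := (pow_dvd_pow (g j) (he j hj)).trans
      ((Finset.dvd_prod_of_mem (fun j => g j ^ e j) hj).mul_left (∏ i ∈ s, ℓ i))
    exact ⟨g j, eq_zero_of_pow_eq_zero (by rwa [← map_pow]),
      (dvd_pow_self _ two_ne_zero).trans hg_sq_dvd, dvd_derivation_of_sq_dvd _ hg_sq_dvd⟩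

end EulerDerivation

theorem multinet_property_general {σ R : Type*} [CommRing R] [IsDomain R]
    [UniqueFactorizationMonoid R] [CharZero R] [DecidableEq R]
    {F G : MvPolynomial σ R} (hcop : IsRelPrime F G)
    {a b : R} (ha : IsUnit a) (hb : IsUnit b)
    {μ ν : Type*} [Fintype μ] [Fintype ν]
    {ℓ : μ → MvPolynomial σ R} (hℓ : ∀ i, (ℓ i).totalDegree ≤ 1)
    {g : ν → MvPolynomial σ R} {e : ν → ℕ} (he : ∀ j, 2 ≤ e j)
    (hK : C a * F + C b * G = (∏ i, ℓ i) * ∏ j, g j ^ e j)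
    {ι κ : Type*} [Fintype ι] [Fintype κ]
    {α : ι → MvPolynomial σ R} (hα : ∀ i, (α i).totalDegree ≤ 1) {m : ι → ℕ}
    (hF : F = ∏ i, α i ^ m i)
    {β : κ → MvPolynomial σ R} (hβ : ∀ j, (β j).totalDegree ≤ 1) {l : κ → ℕ}
    (hG : G = ∏ j, β j ^ l j)
    {p : σ → R} (hFp : eval p F = 0) (hGp : eval p G = 0) :
    ∑ i with eval p (α i) = 0, m i = ∑ j with eval p (β j) = 0, l j := by
  have hFw : HasEulerWeight p F ((∑ i with eval p (α i) = 0, m i : ℕ) : R) :=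
    hF ▸ .prod_pow_of_totalDegree_le_one _ (fun i _ => hα i) m
  have hGw : HasEulerWeight p G ((∑ j with eval p (β j) = 0, l j : ℕ) : R) :=
    hG ▸ .prod_pow_of_totalDegree_le_one _ (fun j _ => hβ j) l
  have hKp : eval p (C a * F + C b * G) = 0 := by simp [hFp, hGp]
  obtain ⟨h, hhp, hhK, hhDK⟩ :=
    exists_dvd_and_dvd_eulerDerivation (fun i _ => hℓ i) (fun j _ => he j) (hK ▸ hKp)
  rw [← hK] at hhK hhDK
  have hhF : IsRelPrime h F := isRelPrime_of_dvd_pencil (hb.map C) hcop hhK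
  have hhG : IsRelPrime h G :=
    isRelPrime_of_dvd_pencil (ha.map C) hcop.symm (add_comm (C a * F) _ ▸ hhK)
  have hW : h ∣ F * eulerDerivation p G - G * eulerDerivation p F :=
    dvd_wronskian_of_dvd_pencil _ (hb.map C) (derivation_C _ a) (derivation_C _ b) hhK hhDK
  exact Nat.cast_injective (hFw.eq_of_dvd_wronskian hGw hhp hhF hhG hW)

/-- The multinet property at points of the base locus: if a pencil with two completely
reducible fibers F = ∏ αᵢ^{mᵢ} and G = ∏ βⱼ^{lⱼ} and irreducible generic fiber has a
third fiber that is a product of linear forms and non-reduced polynomials, then for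
every point p of the base locus, Σ_{αᵢ(p)=0} mᵢ = Σ_{βⱼ(p)=0} lⱼ. -/
theorem multinet_property
    (n d : ℕ) (hd : 1 ≤ d)
    (F G : MvPolynomial (Fin (n + 1)) ℂ)
    (hF : F.IsHomogeneous d) (hG : G.IsHomogeneous d)
    (hFcr : CompletelyReducible n F) (hGcr : CompletelyReducible n G)
    (hcop : RelPrime n F G)
    (hgen : GenericFiberIrreducible n F G)
    -- the third fiber K = aF + bG, distinct from F and from G
    (a b : ℂ) (ha : a ≠ 0) (hb : b ≠ 0)
    (K : MvPolynomial (Fin (n + 1)) ℂ)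
    (hK : K = C a * F + C b * G)
    -- K is a product of linear forms and non-reduced polynomials
    (r s : ℕ)
    (ℓ : Fin r → MvPolynomial (Fin (n + 1)) ℂ)
    (hℓ : ∀ i, IsLinearForm n (ℓ i))
    (g : Fin s → MvPolynomial (Fin (n + 1)) ℂ)
    (hgirr : ∀ j, Irreducible (g j))
    (dg : Fin s → ℕ) (hghom : ∀ j, (g j).IsHomogeneous (dg j))
    (e : Fin s → ℕ) (he : ∀ j, 2 ≤ e j)
    (hKfact : K = (∏ i, ℓ i) * ∏ j, g j ^ e j)
    -- the factorizations of F and G into pairwise non-proportional linear forms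
    (uu vv : ℕ)
    (α : Fin uu → MvPolynomial (Fin (n + 1)) ℂ)
    (hα : ∀ i, IsLinearForm n (α i))
    (hαprop : ∀ i j, i ≠ j → ∀ t : ℂ, α i ≠ C t * α j)
    (m : Fin uu → ℕ) (hm : ∀ i, 1 ≤ m i)
    (hFfact : F = ∏ i, α i ^ m i)
    (β : Fin vv → MvPolynomial (Fin (n + 1)) ℂ)
    (hβ : ∀ j, IsLinearForm n (β j))
    (hβprop : ∀ i j, i ≠ j → ∀ t : ℂ, β i ≠ C t * β j)
    (l : Fin vv → ℕ) (hl : ∀ j, 1 ≤ l j)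
    (hGfact : G = ∏ j, β j ^ l j) :
    ∀ p : Fin (n + 1) → ℂ, p ≠ 0 →
      eval p F = 0 → eval p G = 0 →
      ∑ i ∈ Finset.univ.filter (fun i => eval p (α i) = 0), m i =
      ∑ j ∈ Finset.univ.filter (fun j => eval p (β j) = 0), l j := by
  intro p _ hFp hGp
  exact multinet_property_general (fun _ => hcop _) ha.isUnit hb.isUnit
    (fun i => (hℓ i).2.totalDegree_le) he (hK.symm.trans hKfact)
    (fun i => (hα i).2.totalDegree_le) hFfact (fun j => (hβ j).2.totalDegree_le) hGfact hFp hGp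
end
end
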